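/- Let K be a positive natural number, let μ₀ : Fin K → ℝ be a center, let σ : Fin K → ℝ with σ k > 0 for all k (epistemic standard deviations), and let σ₀ > 0 (prior standard deviation). Consider the credal region B = { μ : Fin K → ℝ | ∀ k, |μ k − μ₀ k| ≤ σ k } of mean vectors, and for μ ∈ B let q_μ = ⊗_{k} N(μ k, (σ k)²) denote the diagonal Gaussian with mean μ, and let p₀ = ⊗_{k} N(0, σ₀²) denote the isotropic Gaussian prior. Define μ* : Fin K → ℝ by μ* k = μ₀ k + sign(μ₀ k)·σ k. Then the Hausdorff KL divergence D_H^+ = sup_{μ ∈ B} KL(q_μ ‖ p₀) is finite and equals (1/2)·∑_{k ∈ Fin K} ( (μ* k)²/σ₀² + (σ k)²/σ₀² − 1 − log((σ k)²/σ₀²) ). -/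

import Mathlib

open MeasureTheory ProbabilityTheory

/-- The Kullback–Leibler divergence `KL(q ‖ p) = ∫ log(dq/dp) dq`. -/
noncomputable def klDiv {α : Type*} [MeasurableSpace α]
    (q p : Measure α) : ℝ :=
  ∫ x, Real.log ((q.rnDeriv p) x).toReal ∂q

/-- The sign of a real number, with `sign 0` interpreted as `1`. -/
noncomputable def sgn (c : ℝ) : ℝ := if c < 0 then -1 else 1

open scoped NNReal ENNReal

/-- Log density ratio of `N(m, s²)` with respect to `N(0, t²)`. -/
noncomputable def logRatio (m s t x : ℝ) : ℝ :=
  Real.log (t / s) - (x - m) ^ 2 / (2 * s ^ 2) + x ^ 2 / (2 * t ^ 2)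

lemma measurable_logRatio (m s t : ℝ) : Measurable (logRatio m s t) := by
  unfold logRatio; fun_prop

lemma gaussian_withDensity (m s t : ℝ) (hs : 0 < s) (ht : 0 < t) (v w : ℝ≥0)
    (hv : (v : ℝ) = s ^ 2) (hw : (w : ℝ) = t ^ 2) :
    gaussianReal m v = (gaussianReal 0 w).withDensity
      (fun x => ENNReal.ofReal (Real.exp (logRatio m s t x))) := by
  have hs' : v ≠ 0 := by
    rintro rfl; exact (pow_pos hs 2).ne hv
  have ht' : w ≠ 0 := by
    rintro rfl; exact (pow_pos ht 2).ne hw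
  have hm := measurable_logRatio m s t
  rw [gaussianReal_of_var_ne_zero _ hs', gaussianReal_of_var_ne_zero _ ht',
    ← withDensity_mul _ (measurable_gaussianPDF _ _) (by fun_prop)]
  congr 1
  ext x
  simp only [Pi.mul_apply, gaussianPDF]
  rw [← ENNReal.ofReal_mul (gaussianPDFReal_nonneg _ _ _)]
  congr 1
  simp only [gaussianPDFReal, hv, hw]
  have e1 : √(2 * Real.pi * s ^ 2) = √(2 * Real.pi) * s := by
    rw [Real.sqrt_mul (by positivity), Real.sqrt_sq hs.le]
  have e2 : √(2 * Real.pi * t ^ 2) = √(2 * Real.pi) * t := by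
    rw [Real.sqrt_mul (by positivity), Real.sqrt_sq ht.le]
  rw [e1, e2]
  have e3 : Real.exp (logRatio m s t x) = (t / s) *
      (Real.exp (-(x - m) ^ 2 / (2 * s ^ 2)) * Real.exp (x ^ 2 / (2 * t ^ 2))) := by
    rw [← Real.exp_add]
    nth_rewrite 1 [← Real.exp_log (show 0 < t / s by positivity)]
    rw [← Real.exp_add]
    congr 1
    unfold logRatio
    ring
  have e4 : Real.exp (-(x - 0) ^ 2 / (2 * t ^ 2)) * Real.exp (x ^ 2 / (2 * t ^ 2)) = 1 := by
    rw [← Real.exp_add, ← Real.exp_zero]; congr 1; ring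
  rw [e3]
  calc _ = (√(2 * Real.pi) * s)⁻¹ * Real.exp (-(x - m) ^ 2 / (2 * s ^ 2)) * 1 := by ring
    _ = _ := by
      rw [← e4]
      have : 0 < √(2 * Real.pi) := by positivity
      field_simp

lemma pi_withDensity_prod {ι : Type*} [Fintype ι] (q p : ι → Measure ℝ)
    [∀ i, IsProbabilityMeasure (q i)] [∀ i, IsProbabilityMeasure (p i)]
    (f : ι → ℝ → ℝ≥0∞) (hf : ∀ i, Measurable (f i)) (h : ∀ i, q i = (p i).withDensity (f i)) :
    Measure.pi q = (Measure.pi p).withDensity (fun x => ∏ i, f i (x i)) := by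
  classical
  refine Measure.pi_eq fun s hs => ?_
  rw [withDensity_apply _ (MeasurableSet.univ_pi hs), ← lintegral_indicator (MeasurableSet.univ_pi hs)]
  have e : (Set.univ.pi s).indicator (fun x : ι → ℝ => ∏ i, f i (x i)) =
      fun x => ∏ i, (s i).indicator (f i) (x i) := by
    ext x
    by_cases hx : x ∈ Set.univ.pi s
    · rw [Set.indicator_of_mem hx]
      exact Finset.prod_congr rfl fun i _ => (Set.indicator_of_mem (hx i trivial) _).symm
    · rw [Set.indicator_of_notMem hx]
      simp only [Set.mem_univ_pi, not_forall] at hx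
      obtain ⟨i, hi⟩ := hx
      exact (Finset.prod_eq_zero (Finset.mem_univ i) (Set.indicator_of_notMem hi _)).symm
  have hm : ∀ i, Measurable ((s i).indicator (f i)) := fun i => (hf i).indicator (hs i)
  rw [e, lintegral_prod_eq_prod_lintegral_of_indepFun Finset.univ
    (X := fun i (x : ι → ℝ) => (s i).indicator (f i) (x i))
    (iIndepFun_pi fun i => (hm i).aemeasurable)
    (fun i => (hm i).comp (measurable_pi_apply i))]
  refine Finset.prod_congr rfl fun i _ => ?_
  rw [h i, withDensity_apply _ (hs i), ← lintegral_indicator (hs i)]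
  exact (measurePreserving_eval p i).lintegral_comp (hm i)

lemma integral_logRatio (m s t : ℝ) (hs : 0 < s) (ht : 0 < t) (v : ℝ≥0)
    (hv : (v : ℝ) = s ^ 2) :
    Integrable (logRatio m s t) (gaussianReal m v) ∧
    ∫ x, logRatio m s t x ∂(gaussianReal m v) =
      (1 / 2) * (m ^ 2 / t ^ 2 + s ^ 2 / t ^ 2 - 1 - Real.log (s ^ 2 / t ^ 2)) := by
  have hL : MemLp (id : ℝ → ℝ) 2 (gaussianReal m v) := memLp_id_gaussianReal' 2 (by simp)
  have i2 : Integrable (fun x : ℝ => x ^ 2) (gaussianReal m v) := hL.integrable_sq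
  have i1 : Integrable (fun x : ℝ => x) (gaussianReal m v) := hL.integrable one_le_two
  have h1 : ∫ x, x ∂(gaussianReal m v) = m := integral_id_gaussianReal
  have h2 : ∫ x, x ^ 2 ∂(gaussianReal m v) = s ^ 2 + m ^ 2 := by
    have := variance_eq_sub hL
    rw [variance_id_gaussianReal] at this
    simp only [Pi.pow_apply, id] at this
    rw [h1] at this
    linarith
  have e : logRatio m s t = fun x => (Real.log (t / s) - m ^ 2 / (2 * s ^ 2)) +
      ((m / s ^ 2) * x + (1 / (2 * t ^ 2) - 1 / (2 * s ^ 2)) * x ^ 2) := by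
    ext x; unfold logRatio; field_simp; ring
  have l1 : Real.log (t / s) = Real.log t - Real.log s := Real.log_div ht.ne' hs.ne'
  have l2 : Real.log (s ^ 2 / t ^ 2) = 2 * Real.log s - 2 * Real.log t := by
    rw [Real.log_div (by positivity) (by positivity), Real.log_pow, Real.log_pow]; norm_num
  have j : Integrable (fun x : ℝ => (m / s ^ 2) * x +
      (1 / (2 * t ^ 2) - 1 / (2 * s ^ 2)) * x ^ 2) (gaussianReal m v) :=
    (i1.const_mul _).add (i2.const_mul _)
  rw [e]
  refine ⟨(integrable_const _).add j, ?_⟩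
  rw [integral_add (integrable_const _) j, integral_add (i1.const_mul _) (i2.const_mul _),
    integral_const_mul, integral_const_mul, h1, h2, l1, l2]
  simp
  field_simp
  ring

lemma klDiv_gaussian_pi {K : ℕ} (μ σ : Fin K → ℝ) (hσ : ∀ k, 0 < σ k) (σ₀ : ℝ) (hσ₀ : 0 < σ₀)
    (v : Fin K → ℝ≥0) (w : ℝ≥0) (hv : ∀ k, (v k : ℝ) = σ k ^ 2) (hw : (w : ℝ) = σ₀ ^ 2) :
    klDiv (Measure.pi fun k => gaussianReal (μ k) (v k))
        (Measure.pi fun _ => gaussianReal 0 w) =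
      (1 / 2) * ∑ k : Fin K, ((μ k) ^ 2 / σ₀ ^ 2 + (σ k) ^ 2 / σ₀ ^ 2 - 1
          - Real.log ((σ k) ^ 2 / σ₀ ^ 2)) := by
  set q := fun k => gaussianReal (μ k) (v k) with hq
  set p : Fin K → Measure ℝ := fun _ => gaussianReal 0 w with hp
  have iq : ∀ k, IsProbabilityMeasure (q k) := fun k =>
    instIsProbabilityMeasureGaussianReal (μ k) (v k)
  have ip : ∀ k, IsProbabilityMeasure (p k) := fun _ =>
    instIsProbabilityMeasureGaussianReal 0 w
  have hm : ∀ k, Measurable (logRatio (μ k) (σ k) σ₀) := fun k => measurable_logRatio _ _ _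
  have hf : ∀ k, Measurable (fun x => ENNReal.ofReal (Real.exp (logRatio (μ k) (σ k) σ₀ x))) :=
    fun k => by have := hm k; fun_prop
  have hd := pi_withDensity_prod q p _ hf
    (fun k => gaussian_withDensity (μ k) (σ k) σ₀ (hσ k) hσ₀ _ _ (hv k) hw)
  have hac : Measure.pi q ≪ Measure.pi p := by rw [hd]; exact withDensity_absolutelyContinuous _ _
  have hr : (Measure.pi q).rnDeriv (Measure.pi p) =ᵐ[Measure.pi p]
      fun x => ∏ k, ENNReal.ofReal (Real.exp (logRatio (μ k) (σ k) σ₀ (x k))) := by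
    rw [hd]
    exact Measure.rnDeriv_withDensity _
      (Finset.measurable_prod _ fun k _ => (hf k).comp (measurable_pi_apply k))
  unfold klDiv
  have hlog : (fun x => Real.log ((Measure.pi q).rnDeriv (Measure.pi p) x).toReal)
      =ᵐ[Measure.pi q] fun x => ∑ k, logRatio (μ k) (σ k) σ₀ (x k) := by
    filter_upwards [hac.ae_le hr] with x hx
    rw [hx, ENNReal.toReal_prod]
    simp_rw [ENNReal.toReal_ofReal (Real.exp_pos _).le]
    rw [← Real.exp_sum, Real.log_exp]
  rw [integral_congr_ae hlog, integral_finsetSum, Finset.mul_sum]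
  · refine Finset.sum_congr rfl fun k _ => ?_
    rw [← (integral_logRatio (μ k) (σ k) σ₀ (hσ k) hσ₀ _ (hv k)).2]
    exact integral_comp_eval (μ := q) (hm k).aestronglyMeasurable
  · intro k _
    exact (measurePreserving_eval q k).integrable_comp_of_integrable
      (integral_logRatio (μ k) (σ k) σ₀ (hσ k) hσ₀ _ (hv k)).1

/-- **Closed-Form Hausdorff KL.** For the credal set of diagonal Gaussians
with fixed diagonal covariance `diag(σ₁², …, σ_K²)` whose mean ranges over the
coordinatewise box of radius `σ k` around the center `μ₀`, the worst-case
(Hausdorff) KL divergence to the isotropic prior `N(0, σ₀² I)` is finite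
(indeed attained) and equals
`½ ∑ₖ ((μ* k)²/σ₀² + (σ k)²/σ₀² − 1 − log((σ k)²/σ₀²))`
where `μ* k = μ₀ k + sign(μ₀ k)·σ k`. -/
theorem hausdorffKL_closed_form (K : ℕ) (hK : 0 < K)
    (μ₀ : Fin K → ℝ) (σ : Fin K → ℝ) (hσ : ∀ k, 0 < σ k)
    (σ₀ : ℝ) (hσ₀ : 0 < σ₀)
    (B : Set (Fin K → ℝ)) (hB : B = {μ | ∀ k, |μ k - μ₀ k| ≤ σ k})
    (kl : (Fin K → ℝ) → ℝ)
    (hkl : kl = fun μ => klDiv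
        (Measure.pi fun k => gaussianReal (μ k) ⟨(σ k) ^ 2, sq_nonneg (σ k)⟩)
        (Measure.pi fun _ => gaussianReal 0 ⟨σ₀ ^ 2, sq_nonneg σ₀⟩))
    (μstar : Fin K → ℝ) (hμstar : μstar = fun k => μ₀ k + sgn (μ₀ k) * σ k) :
    IsGreatest (kl '' B)
      ((1 / 2) * ∑ k : Fin K,
        ((μstar k) ^ 2 / σ₀ ^ 2 + (σ k) ^ 2 / σ₀ ^ 2 - 1
          - Real.log ((σ k) ^ 2 / σ₀ ^ 2))) := by
  subst hB hkl hμstar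
  refine ⟨⟨fun k => μ₀ k + sgn (μ₀ k) * σ k, ?_, klDiv_gaussian_pi _ σ hσ σ₀ hσ₀ _ _ (fun _ => rfl) rfl⟩, ?_⟩
  · intro k
    have := hσ k
    simp only [add_sub_cancel_left, sgn]
    split_ifs <;> simp [abs_of_pos this]
  · rintro _ ⟨μ, hμ, rfl⟩
    simp only
    refine (klDiv_gaussian_pi μ σ hσ σ₀ hσ₀ (fun k => ⟨(σ k) ^ 2, sq_nonneg (σ k)⟩)
      ⟨σ₀ ^ 2, sq_nonneg σ₀⟩ (fun _ => rfl) rfl).trans_le ?_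
    refine mul_le_mul_of_nonneg_left (Finset.sum_le_sum fun k _ => ?_) (by norm_num)
    have h1 := abs_le.1 (hμ k)
    have h2 := hσ k
    have h3 : (μ k) ^ 2 ≤ (μ₀ k + sgn (μ₀ k) * σ k) ^ 2 := by
      rw [sgn]
      split_ifs with h
      · nlinarith [h1.1, h1.2]
      · push Not at h
        nlinarith [h1.1, h1.2]
    have h4 := div_le_div_of_nonneg_right h3 (sq_nonneg σ₀)
    linarith
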